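/- arXiv:2507.19293 — 2 statements merged into one kernel-verified Lean document; each statement's English description precedes it below -/
import Mathlib

section
/- Let n ≥ 2 be even. Then there exist two Gray codes for S_{n+1} under adjacent position-swaps: a code G from the word 123⋯(n+1) to the word 213⋯(n+1), and a code H from the word 134⋯(n+1)2 to the word (n+1)12⋯n, such that for each i ∈ [n] the swap of positions (i, i+1) is used the same number of times in H as in G. -/
/-!
By parity, two arrangements joined by a Hamilton path in the graph of adjacent swaps on `S_{n+1}`
have opposite signs. For `n ≥ 4`, more is true than the converse: there is one multiset of swaps,
depending only on `n`, such that any two arrangements of opposite sign are joined by a Hamilton path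
using exactly these swaps. Both pairs of end points in question have opposite signs, so this yields
the two Gray codes.

For the induction step, cut `S_{k+1}` into the `k + 1` blocks of arrangements with a given last
entry. A Hamilton path in the first block is interrupted at a swap of the last two positions of the
smaller group, where a detour leaves for the other blocks, passes through them one after another and
returns; every block contributes the same swaps, and the crossings between them are counted alike.
If the end points lie in different blocks, the detour omits the block of the second one, which is
visited at the end; the detour must therefore be placed where neither value swapped is the last
entry `d` of that block. That such a place exists for each `d` is carried along in the induction.

The induction starts with `S_5`, where suitable paths were found by computer and are verified by
evaluation. It cannot start earlier: the end points at hand do not admit equal counts in `S_4`.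
-/

namespace AdjacentGrayCode

open Equiv Equiv.Perm

variable {n : ℕ}

/-- The swap of the adjacent positions `i` and `i + 1`; it acts on words by right
multiplication. -/
def adjSwap (i : Fin n) : Perm (Fin (n + 1)) :=
  swap i.castSucc i.succ

theorem sign_adjSwap (i : Fin n) : sign (adjSwap i) = -1 :=
  sign_swap i.castSucc_lt_succ.ne

theorem sign_mul_adjSwap (σ : Perm (Fin (n + 1))) (i : Fin n) :
    sign (σ * adjSwap i) = -sign σ := by
  rw [Perm.sign_mul, sign_adjSwap, mul_neg_one]

theorem mul_adjSwap_mul_adjSwap (σ : Perm (Fin (n + 1))) (i : Fin n) :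
    σ * adjSwap i * adjSwap i = σ :=
  mul_swap_mul_self _ _ σ

theorem mul_adjSwap_castSucc (σ : Perm (Fin (n + 1))) (i : Fin n) :
    (σ * adjSwap i) i.castSucc = σ i.succ :=
  congrArg σ (swap_apply_left _ _)

theorem mul_adjSwap_succ (σ : Perm (Fin (n + 1))) (i : Fin n) :
    (σ * adjSwap i) i.succ = σ i.castSucc :=
  congrArg σ (swap_apply_right _ _)

theorem mul_adjSwap_apply_of_succ_lt (σ : Perm (Fin (n + 1))) {i : Fin n} {j : Fin (n + 1)}
    (h : i.succ < j) : (σ * adjSwap i) j = σ j :=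
  congrArg σ (swap_apply_of_ne_of_ne (i.castSucc_lt_succ.trans h).ne' h.ne')

theorem adjSwap_injective : Function.Injective (adjSwap : Fin n → Perm (Fin (n + 1))) := by
  refine Function.Injective.of_lt_imp_ne fun i j hij h => ?_
  have hfix : adjSwap j i.castSucc = i.castSucc :=
    swap_apply_of_ne_of_ne (Fin.castSucc_lt_castSucc_iff.2 hij).ne
      ((Fin.castSucc_lt_castSucc_iff.2 hij).trans j.castSucc_lt_succ).ne
  rw [← h, adjSwap, swap_apply_left] at hfix
  exact i.castSucc_lt_succ.ne' hfix

/-- The arrangement reached from `x` by performing the swaps listed in `l`. -/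
def endpoint (x : Perm (Fin (n + 1))) (l : List (Fin n)) : Perm (Fin (n + 1)) :=
  l.foldl (fun σ i => σ * adjSwap i) x

/-- All arrangements visited from `x`, the first and the last one included, when the swaps
listed in `l` are performed one after another. -/
def vertices (x : Perm (Fin (n + 1))) (l : List (Fin n)) : List (Perm (Fin (n + 1))) :=
  l.scanl (fun σ i => σ * adjSwap i) x

theorem endpoint_append_cons (x : Perm (Fin (n + 1))) (l₁ l₂ : List (Fin n)) (i : Fin n) :
    endpoint x (l₁ ++ i :: l₂) = endpoint (endpoint x l₁ * adjSwap i) l₂ :=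
  List.foldl_append

theorem vertices_append_cons (x : Perm (Fin (n + 1))) (l₁ l₂ : List (Fin n)) (i : Fin n) :
    vertices x (l₁ ++ i :: l₂) = vertices x l₁ ++ vertices (endpoint x l₁ * adjSwap i) l₂ := by
  simp only [vertices, endpoint, List.scanl_append, List.scanl_cons, List.tail_cons]

theorem mem_vertices_self (x : Perm (Fin (n + 1))) (l : List (Fin n)) : x ∈ vertices x l :=
  List.mem_of_mem_head? List.head?_scanl

theorem endpoint_mem_vertices (x : Perm (Fin (n + 1))) (l : List (Fin n)) :
    endpoint x l ∈ vertices x l :=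
  List.mem_of_getLast? List.getLast?_scanl

theorem endpoint_map {m : ℕ} {f : Perm (Fin (n + 1)) → Perm (Fin (m + 1))} {g : Fin n → Fin m}
    (hfg : ∀ σ i, f (σ * adjSwap i) = f σ * adjSwap (g i)) (x : Perm (Fin (n + 1)))
    (l : List (Fin n)) : endpoint (f x) (l.map g) = f (endpoint x l) := by
  rw [endpoint, List.foldl_map]
  exact List.foldl_hom f fun σ i => (hfg σ i).symm

theorem vertices_map {m : ℕ} {f : Perm (Fin (n + 1)) → Perm (Fin (m + 1))} {g : Fin n → Fin m}
    (hfg : ∀ σ i, f (σ * adjSwap i) = f σ * adjSwap (g i)) (x : Perm (Fin (n + 1)))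
    (l : List (Fin n)) : vertices (f x) (l.map g) = (vertices x l).map f := by
  induction l generalizing x with
  | nil => rfl
  | cons i l ih => simp only [vertices, List.map_cons, List.scanl_cons, ← hfg] at ih ⊢; rw [ih]

theorem exists_append_of_mem_zip {x σ : Perm (Fin (n + 1))} {l : List (Fin n)} {i : Fin n}
    (h : (σ, i) ∈ (vertices x l).zip l) : ∃ l₁ l₂, l = l₁ ++ i :: l₂ ∧ endpoint x l₁ = σ := by
  induction l generalizing x with
  | nil => exact absurd (List.of_mem_zip h).2 List.not_mem_nil
  | cons k l ih =>
    rw [vertices, List.scanl_cons, List.zip_cons_cons, List.mem_cons] at h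
    obtain h | h := h
    · obtain ⟨rfl, rfl⟩ := Prod.mk.inj h
      exact ⟨[], l, rfl, rfl⟩
    · obtain ⟨l₁, l₂, rfl, rfl⟩ := ih h
      exact ⟨k :: l₁, l₂, rfl, rfl⟩

/-- Performing the swaps listed in `l` leads from `x` to `y` and visits every element of `S`
exactly once and nothing else. -/
structure IsGrayWord (x y : Perm (Fin (n + 1))) (S : Set (Perm (Fin (n + 1))))
    (l : List (Fin n)) : Prop where
  endpoint_eq : endpoint x l = y
  nodup : (vertices x l).Nodup
  mem_iff : ∀ σ, σ ∈ vertices x l ↔ σ ∈ S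

namespace IsGrayWord

variable {x y z : Perm (Fin (n + 1))} {S T : Set (Perm (Fin (n + 1)))} {l l₁ l₂ : List (Fin n)}
  {i j : Fin n}

theorem left_mem (h : IsGrayWord x y S l) : x ∈ S :=
  (h.mem_iff x).1 (mem_vertices_self x l)

theorem right_mem (h : IsGrayWord x y S l) : y ∈ S :=
  (h.mem_iff y).1 (h.endpoint_eq ▸ endpoint_mem_vertices x l)

theorem append (h₁ : IsGrayWord x y S l₁) (h₂ : IsGrayWord (y * adjSwap i) z T l₂)
    (hST : Disjoint S T) : IsGrayWord x z (S ∪ T) (l₁ ++ i :: l₂) where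
  endpoint_eq := by rw [endpoint_append_cons, h₁.endpoint_eq, h₂.endpoint_eq]
  nodup := by
    rw [vertices_append_cons, h₁.endpoint_eq]
    refine h₁.nodup.append h₂.nodup fun σ hσ₁ hσ₂ => ?_
    exact Set.disjoint_left.1 hST ((h₁.mem_iff σ).1 hσ₁) ((h₂.mem_iff σ).1 hσ₂)
  mem_iff σ := by
    rw [vertices_append_cons, h₁.endpoint_eq, List.mem_append, h₁.mem_iff, h₂.mem_iff,
      Set.mem_union]

theorem exists_split (h : IsGrayWord x y S (l₁ ++ i :: l₂)) :
    ∃ S₁ S₂, IsGrayWord x (endpoint x l₁) S₁ l₁ ∧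
      IsGrayWord (endpoint x l₁ * adjSwap i) y S₂ l₂ ∧ Disjoint S₁ S₂ ∧ S₁ ∪ S₂ = S := by
  have hnodup := h.nodup
  rw [vertices_append_cons, List.nodup_append'] at hnodup
  obtain ⟨hnodup₁, hnodup₂, hdisj⟩ := hnodup
  refine ⟨{σ | σ ∈ vertices x l₁}, {σ | σ ∈ vertices (endpoint x l₁ * adjSwap i) l₂},
    ⟨rfl, hnodup₁, fun _ => Iff.rfl⟩,
    ⟨endpoint_append_cons x l₁ l₂ i ▸ h.endpoint_eq, hnodup₂, fun _ => Iff.rfl⟩,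
    Set.disjoint_left.2 fun _ h₁ h₂ => hdisj h₁ h₂, ?_⟩
  ext σ
  rw [← h.mem_iff, vertices_append_cons, List.mem_append]
  rfl

theorem endpoint_mem (h : IsGrayWord x y S (l₁ ++ i :: l₂)) : endpoint x l₁ ∈ S := by
  obtain ⟨S₁, S₂, h₁, -, -, rfl⟩ := h.exists_split
  exact .inl h₁.right_mem

theorem endpoint_mul_adjSwap_mem (h : IsGrayWord x y S (l₁ ++ i :: l₂)) :
    endpoint x l₁ * adjSwap i ∈ S := by
  obtain ⟨S₁, S₂, -, h₂, -, rfl⟩ := h.exists_split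
  exact .inr h₂.left_mem

theorem detour {d : List (Fin n)} (h : IsGrayWord x y S (l₁ ++ i :: l₂))
    (hd : IsGrayWord (endpoint x l₁ * adjSwap j) (endpoint x l₁ * adjSwap i * adjSwap j) T d)
    (hST : Disjoint S T) : IsGrayWord x y (S ∪ T) (l₁ ++ j :: (d ++ j :: l₂)) := by
  obtain ⟨S₁, S₂, h₁, h₂, hS, rfl⟩ := h.exists_split
  rw [Set.disjoint_union_left] at hST
  rw [Set.union_right_comm, Set.union_assoc]
  refine h₁.append (hd.append ?_ hST.2.symm) (Set.disjoint_union_right.2 ⟨hST.1, hS⟩)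
  rwa [mul_adjSwap_mul_adjSwap]

theorem map {m : ℕ} {f : Perm (Fin (n + 1)) → Perm (Fin (m + 1))} {g : Fin n → Fin m}
    (hf : Function.Injective f) (hfg : ∀ σ i, f (σ * adjSwap i) = f σ * adjSwap (g i))
    (h : IsGrayWord x y S l) : IsGrayWord (f x) (f y) (f '' S) (l.map g) where
  endpoint_eq := by rw [endpoint_map hfg, h.endpoint_eq]
  nodup := by
    rw [vertices_map hfg]
    exact h.nodup.map hf
  mem_iff σ := by
    simp only [vertices_map hfg, List.mem_map, h.mem_iff, Set.mem_image]

theorem univ_of_length (hend : endpoint x l = y) (hnodup : (vertices x l).Nodup)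
    (hl : l.length + 1 = (n + 1).factorial) : IsGrayWord x y Set.univ l where
  endpoint_eq := hend
  nodup := hnodup
  mem_iff σ := by
    have huniv : (vertices x l).toFinset = Finset.univ := by
      rw [← Finset.card_eq_iff_eq_univ, List.toFinset_card_of_nodup hnodup, vertices,
        List.length_scanl, hl, Fintype.card_perm, Fintype.card_fin]
    rw [← List.mem_toFinset, huniv]
    exact iff_of_true (Finset.mem_univ σ) (Set.mem_univ σ)

end IsGrayWord

/-- The arrangements that agree with `x` at every position after `b`: the left coset of `x` under
the group permuting the positions `0, …, b`. -/
def block (b : Fin (n + 1)) (x : Perm (Fin (n + 1))) : Set (Perm (Fin (n + 1))) :=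
  {σ | Set.EqOn σ x (Set.Ioi b)}

/-- The values that occur at the positions `0, …, b` in the elements of `block b x`. -/
def freeValues (b : Fin (n + 1)) (x : Perm (Fin (n + 1))) : Finset (Fin (n + 1)) :=
  ((Finset.Ioi b).image x)ᶜ

/-- The part of `block c x` in which position `c` carries a value from `L`: a union of smaller
blocks, one for each value in `L`. -/
def blockOver (c : Fin (n + 1)) (x : Perm (Fin (n + 1))) (L : Finset (Fin (n + 1))) :
    Set (Perm (Fin (n + 1))) :=
  {σ | σ ∈ block c x ∧ σ c ∈ L}

section Block

variable {b c : Fin (n + 1)} {u x y : Perm (Fin (n + 1))} {L L' : Finset (Fin (n + 1))} {j : Fin n}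

theorem mem_block_self : x ∈ block b x :=
  Set.eqOn_refl x _

theorem block_eq_of_mem (h : y ∈ block b x) : block b y = block b x :=
  Set.ext fun _ => ⟨fun hσ => hσ.trans h, fun hσ => hσ.trans h.symm⟩

theorem mul_swap_mem_block {p q : Fin (n + 1)} (hp : p ≤ b) (hq : q ≤ b) :
    x * swap p q ∈ block b x := fun _ hi =>
  congrArg x (swap_apply_of_ne_of_ne (hp.trans_lt hi).ne' (hq.trans_lt hi).ne')

theorem mul_adjSwap_mem_block (h : j.succ ≤ b) (hy : y ∈ block b x) : y * adjSwap j ∈ block b x :=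
  (mul_swap_mem_block (j.castSucc_lt_succ.le.trans h) h).trans hy

theorem block_last : block (Fin.last n) x = Set.univ :=
  Set.eq_univ_of_forall fun _ i hi => absurd hi i.le_last.not_gt

theorem apply_mem_freeValues {a : Fin (n + 1)} : x a ∈ freeValues b x ↔ a ≤ b := by
  simp only [freeValues, Finset.mem_compl, Finset.mem_image, Finset.mem_Ioi,
    x.injective.eq_iff, exists_eq_right, not_lt]

theorem card_freeValues : (freeValues b x).card = b + 1 := by
  rw [freeValues, Finset.card_compl, Finset.card_image_of_injective _ x.injective, Fin.card_Ioi,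
    Fintype.card_fin]
  omega

theorem freeValues_eq_of_mem (h : y ∈ block b x) : freeValues b y = freeValues b x := by
  rw [freeValues, freeValues, Finset.image_congr (by rwa [Finset.coe_Ioi])]

theorem mem_freeValues_castSucc {z : Fin (n + 1)} :
    z ∈ freeValues j.castSucc x ↔ z ∈ freeValues j.succ x ∧ z ≠ x j.succ := by
  obtain ⟨a, rfl⟩ := x.surjective z
  rw [apply_mem_freeValues, apply_mem_freeValues, x.injective.ne_iff, ← lt_iff_le_and_ne,
    Fin.le_castSucc_iff]

theorem mem_block_castSucc {σ : Perm (Fin (n + 1))} :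
    σ ∈ block j.castSucc x ↔ σ ∈ block j.succ x ∧ σ j.succ = x j.succ := by
  refine ⟨fun h => ⟨fun i hi => h (j.castSucc_lt_succ.trans hi), h j.castSucc_lt_succ⟩,
    fun ⟨h, hj⟩ i hi => ?_⟩
  obtain rfl | hi := (Fin.castSucc_lt_iff_succ_le.1 hi).eq_or_lt
  exacts [hj, h hi]

theorem blockOver_singleton : blockOver j.succ x {x j.succ} = block j.castSucc x := by
  ext σ
  rw [mem_block_castSucc, blockOver, Set.mem_ofPred, Finset.mem_singleton]

theorem blockOver_freeValues : blockOver c x (freeValues c x) = block c x := by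
  ext σ
  refine and_iff_left_of_imp fun h => ?_
  rw [← freeValues_eq_of_mem h, apply_mem_freeValues]

theorem blockOver_eq_of_mem (h : y ∈ block c x) : blockOver c y L = blockOver c x L := by
  rw [blockOver, block_eq_of_mem h, blockOver]

theorem block_union_blockOver_erase (h : x j.succ ∈ L) :
    block j.castSucc x ∪ blockOver j.succ x (L.erase (x j.succ)) = blockOver j.succ x L := by
  ext σ
  simp only [Set.mem_union, mem_block_castSucc, blockOver, Set.mem_ofPred, Finset.mem_erase,
    ← and_or_left]
  refine and_congr_right fun _ => ⟨?_, fun hσ => ?_⟩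
  · rintro (hσ | hσ)
    exacts [hσ ▸ h, hσ.2]
  · exact (eq_or_ne _ _).imp_right fun hne => ⟨hne, hσ⟩

theorem disjoint_block_blockOver_erase :
    Disjoint (block j.castSucc x) (blockOver j.succ x (L.erase (x j.succ))) :=
  Set.disjoint_left.2 fun _ hσ hσ' => Finset.ne_of_mem_erase hσ'.2 (mem_block_castSucc.1 hσ).2

theorem exists_mem_block_sign_eq_neg (hb : 2 ≤ (b : ℕ)) {z : Fin (n + 1)}
    (hz : z ∈ freeValues b u) : ∃ e ∈ block b u, e b = z ∧ sign e = -sign u := by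
  have hsign {p q : Fin (n + 1)} (hpq : p ≠ q) : sign (u * swap p q) = -sign u := by
    rw [Perm.sign_mul, sign_swap hpq, mul_neg_one]
  obtain ⟨a, rfl⟩ := u.surjective z
  rw [apply_mem_freeValues] at hz
  obtain rfl | hab := eq_or_ne a b
  · let p : Fin (n + 1) := ⟨0, by omega⟩
    let q : Fin (n + 1) := ⟨1, by omega⟩
    have hp : p < a := Fin.lt_def.2 (by simp only [p]; omega)
    have hq : q < a := Fin.lt_def.2 (by simp only [q]; omega)
    exact ⟨u * swap p q, mul_swap_mem_block hp.le hq.le,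
      congrArg u (swap_apply_of_ne_of_ne hp.ne' hq.ne'), hsign (by simp [p, q])⟩
  · exact ⟨u * swap a b, mul_swap_mem_block hz le_rfl, congrArg u (swap_apply_right a b),
      hsign hab⟩

end Block

/-- Whichever value `d` is singled out, the word `l` from `x` contains an occurrence of the letter
`i` that swaps two values different from `d`. -/
def IsEvasive (i : Fin n) (x : Perm (Fin (n + 1))) (l : List (Fin n)) : Prop :=
  ∀ d, ∃ l₁ l₂, l = l₁ ++ i :: l₂ ∧ endpoint x l₁ i.castSucc ≠ d ∧ endpoint x l₁ i.succ ≠ d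

/-- Any two arrangements of opposite sign in a block of `S_{i+2}` are joined by an evasive word that
visits the block exactly once, and the multiset `M` of its letters does not depend on the two
arrangements. -/
def UniformlyLaceable (i : Fin n) (M : Multiset (Fin n)) : Prop :=
  ∀ x y, y ∈ block i.succ x → sign y = -sign x →
    ∃ l, IsGrayWord x y (block i.succ x) l ∧ (l : Multiset (Fin n)) = M ∧ IsEvasive i x l

section Extension

variable {i j : Fin n} {M : Multiset (Fin n)} {x y u w : Perm (Fin (n + 1))}
  {K L : Finset (Fin (n + 1))}

theorem exists_mem_eq_imp_eq_singleton {α : Type*} {s : Finset α} {t : α} (ht : t ∈ s) :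
    ∃ z ∈ s, t = z → s = {z} := by
  obtain h | h := Finset.eq_singleton_or_nontrivial ht
  · exact ⟨t, ht, fun _ => h⟩
  · obtain ⟨z, hz, hzt⟩ := h.exists_ne t
    exact ⟨z, hz, fun h => absurd h.symm hzt⟩

theorem exists_chain (hij : i.succ = j.castSucc) (hi : 1 ≤ (i : ℕ)) (hM : UniformlyLaceable i M)
    (hK : K ⊆ freeValues j.succ u) (hu : u j.succ ∈ K) (hw : w ∈ blockOver j.succ u K)
    (hK_single : w j.succ = u j.succ → K = {u j.succ}) (hsign : sign w = -sign u) :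
    ∃ l, IsGrayWord u w (blockOver j.succ u K) l ∧ j ::ₘ (l : Multiset (Fin n)) =
      K.card • (j ::ₘ M) := by
  induction K using Finset.strongInduction generalizing u with | H K ih =>
  by_cases hwu : w j.succ = u j.succ
  · obtain rfl := hK_single hwu
    rw [blockOver_singleton, ← hij] at hw ⊢
    obtain ⟨l, hl, rfl, -⟩ := hM u w hw hsign
    exact ⟨l, hl, by rw [Finset.card_singleton, one_smul]⟩
  -- The next block to enter is never that of `w`, unless it is the only one left.
  · have hwK : w j.succ ∈ K.erase (u j.succ) := Finset.mem_erase.2 ⟨hwu, hw.2⟩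
    obtain ⟨z, hz, hz_single⟩ := exists_mem_eq_imp_eq_singleton hwK
    obtain ⟨hzu, hzK⟩ := Finset.mem_erase.1 hz
    obtain ⟨e, he, rfl, he_sign⟩ := exists_mem_block_sign_eq_neg (b := j.castSucc) (u := u)
      (by rw [← hij, Fin.val_succ]; omega) (mem_freeValues_castSucc.2 ⟨hK hzK, hzu⟩)
    rw [← mul_adjSwap_succ] at hz hz_single
    have hv : e * adjSwap j ∈ block j.succ u :=
      mul_adjSwap_mem_block le_rfl (mem_block_castSucc.1 he).1
    obtain ⟨l₁, hl₁, hl₁M, -⟩ := hM u e (hij ▸ he) he_sign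
    obtain ⟨l₂, hl₂, hl₂M⟩ := ih _ (Finset.erase_ssubset hu)
      ((Finset.erase_subset _ _).trans (freeValues_eq_of_mem hv ▸ hK)) hz
      (blockOver_eq_of_mem hv ▸ ⟨hw.1, hwK⟩) hz_single
      (by rw [sign_mul_adjSwap, he_sign, neg_neg, hsign])
    refine ⟨l₁ ++ j :: l₂, ?_, ?_⟩
    · rw [blockOver_eq_of_mem hv] at hl₂
      rw [hij] at hl₁
      rw [← block_union_blockOver_erase hu]
      exact hl₁.append hl₂ disjoint_block_blockOver_erase
    · rw [← Multiset.coe_add, ← Multiset.cons_coe, hl₂M, ← Multiset.cons_add, hl₁M, ← succ_nsmul',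
        Finset.card_erase_add_one hu]

theorem IsEvasive.append {l : List (Fin n)} (h : IsEvasive j x l) (r : List (Fin n)) :
    IsEvasive j x (l ++ r) := by
  intro d
  obtain ⟨l₁, l₂, rfl, hd⟩ := h d
  exact ⟨l₁, l₂ ++ r, List.append_assoc _ _ _, hd⟩

theorem isEvasive_detour (hij : i.succ = j.castSucc) {T : Set (Perm (Fin (n + 1)))}
    {l₁ l₂ r : List (Fin n)}
    (hr : IsGrayWord (endpoint x l₁ * adjSwap j) (endpoint x l₁ * adjSwap i * adjSwap j) T r)
    (hj : j ∈ r) (hT : ∀ σ ∈ T, σ j.succ ≠ endpoint x l₁ j.succ) :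
    IsEvasive j x (l₁ ++ j :: (r ++ j :: l₂)) := by
  -- Every `d` is avoided by the letter `j` inside the detour, by the one that ends it or by the
  -- one that starts it.
  intro d
  set v := endpoint x l₁
  obtain rfl | hd := eq_or_ne d (v j.succ)
  · obtain ⟨r₁, r₂, rfl⟩ := List.append_of_mem hj
    have hend : endpoint x (l₁ ++ j :: r₁) = endpoint (v * adjSwap j) r₁ :=
      endpoint_append_cons _ _ _ _
    refine ⟨l₁ ++ j :: r₁, r₂ ++ j :: l₂, by simp only [List.append_assoc, List.cons_append], ?_⟩
    rw [hend, ← mul_adjSwap_succ (endpoint _ _)]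
    exact ⟨hT _ hr.endpoint_mul_adjSwap_mem, hT _ hr.endpoint_mem⟩
  obtain rfl | hd' := eq_or_ne d (v j.castSucc)
  · have hend : endpoint x (l₁ ++ j :: r) = v * adjSwap i * adjSwap j := by
      rw [endpoint_append_cons, ← hr.endpoint_eq]
    refine ⟨l₁ ++ j :: r, l₂, by simp only [List.append_assoc, List.cons_append], ?_⟩
    rw [hend, mul_adjSwap_castSucc, mul_adjSwap_succ,
      mul_adjSwap_apply_of_succ_lt v (hij ▸ j.castSucc_lt_succ), ← hij, mul_adjSwap_succ]
    refine ⟨hij ▸ hd.symm, v.injective.ne i.castSucc_lt_succ.ne⟩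
  · exact ⟨l₁, r ++ j :: l₂, rfl, hd'.symm, hd.symm⟩

theorem mem_of_cons_eq_nsmul {α : Type*} {a : α} {s t : Multiset α} {k : ℕ} (hk : 1 < k)
    (h : a ::ₘ s = k • (a ::ₘ t)) : a ∈ s := by
  classical
  have hcount := congrArg (Multiset.count a) h
  rw [Multiset.count_nsmul, Multiset.count_cons_self, Multiset.count_cons_self] at hcount
  exact Multiset.count_pos.1 (by nlinarith)

theorem exists_detour (hij : i.succ = j.castSucc) (hi : 1 ≤ (i : ℕ)) (hM : UniformlyLaceable i M)
    (hL : L ⊆ freeValues j.succ x) {v : Perm (Fin (n + 1))} (hv : v ∈ block j.castSucc x)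
    (hvi : v i.castSucc ∈ L) (hvi' : v i.succ ∈ L) :
    ∃ r, IsGrayWord (v * adjSwap j) (v * adjSwap i * adjSwap j)
        (blockOver j.succ x (L.erase (x j.succ))) r ∧
      j ::ₘ (r : Multiset (Fin n)) = (L.erase (x j.succ)).card • (j ::ₘ M) ∧ j ∈ r := by
  obtain ⟨hvx, hvj⟩ := mem_block_castSucc.1 hv
  have hij' : i.succ < j.succ := hij ▸ j.castSucc_lt_succ
  have hmem {a : Fin (n + 1)} (ha : a < j.succ) (haL : v a ∈ L) : v a ∈ L.erase (x j.succ) :=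
    Finset.mem_erase.2 ⟨hvj ▸ v.injective.ne ha.ne, haL⟩
  have hu_apply : (v * adjSwap j) j.succ = v i.succ := by rw [mul_adjSwap_succ, hij]
  have hw_apply : (v * adjSwap i * adjSwap j) j.succ = v i.castSucc := by
    rw [mul_adjSwap_succ, ← hij, mul_adjSwap_succ]
  have hu : (v * adjSwap j) j.succ ∈ L.erase (x j.succ) := hu_apply ▸ hmem hij' hvi'
  have hw : (v * adjSwap i * adjSwap j) j.succ ∈ L.erase (x j.succ) :=
    hw_apply ▸ hmem (i.castSucc_lt_succ.trans hij') hvi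
  have hne : (v * adjSwap i * adjSwap j) j.succ ≠ (v * adjSwap j) j.succ := by
    rw [hu_apply, hw_apply]
    exact v.injective.ne i.castSucc_lt_succ.ne
  have hu_block : v * adjSwap j ∈ block j.succ x := mul_adjSwap_mem_block le_rfl hvx
  have hw_block : v * adjSwap i * adjSwap j ∈ block j.succ x :=
    mul_adjSwap_mem_block le_rfl (mul_adjSwap_mem_block hij'.le hvx)
  obtain ⟨r, hr, hrM⟩ := exists_chain hij hi hM
    ((Finset.erase_subset _ _).trans (freeValues_eq_of_mem hu_block ▸ hL)) hu
    ⟨block_eq_of_mem hu_block ▸ hw_block, hw⟩ (fun h => absurd h hne)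
    (by simp only [sign_mul_adjSwap])
  have hcard : 1 < (L.erase (x j.succ)).card := Finset.one_lt_card.2 ⟨_, hu, _, hw, hne.symm⟩
  exact ⟨r, blockOver_eq_of_mem hu_block ▸ hr, hrM,
    Multiset.mem_coe.1 (mem_of_cons_eq_nsmul hcard hrM)⟩

theorem exists_evasive_word (hij : i.succ = j.castSucc) (hi : 1 ≤ (i : ℕ))
    (hM : UniformlyLaceable i M) (hL : L ⊆ freeValues j.succ x) (hx : x j.succ ∈ L)
    {d : Fin (n + 1)} (hd : ∀ z ∈ freeValues j.succ x, z ≠ d → z ∈ L)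
    (hy : y ∈ block i.succ x) (hsign : sign y = -sign x) :
    ∃ l, IsGrayWord x y (blockOver j.succ x L) l ∧
      i ::ₘ (l : Multiset (Fin n)) = L.card • (j ::ₘ M) ∧ IsEvasive j x l := by
  obtain ⟨l, hl, rfl, hev⟩ := hM x y hy hsign
  -- The swap `i` is replaced by `j`, a tour of the other blocks, and `j`, at a place where
  -- neither of the two blocks next to the excursion carries the value `d`.
  obtain ⟨l₁, l₂, rfl, hd₁, hd₂⟩ := hev d
  have hv : endpoint x l₁ ∈ block j.castSucc x := hij ▸ hl.endpoint_mem
  have hmem {a : Fin (n + 1)} (ha : a ≤ i.succ) (had : endpoint x l₁ a ≠ d) :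
      endpoint x l₁ a ∈ L := by
    refine hd _ ?_ had
    rw [← freeValues_eq_of_mem (mem_block_castSucc.1 hv).1, apply_mem_freeValues]
    exact ha.trans (hij ▸ j.castSucc_lt_succ.le)
  obtain ⟨r, hr, hrM, hjr⟩ := exists_detour hij hi hM hL hv
    (hmem i.castSucc_lt_succ.le hd₁) (hmem le_rfl hd₂)
  refine ⟨l₁ ++ j :: (r ++ j :: l₂), ?_, ?_, isEvasive_detour hij hr hjr ?_⟩
  · rw [← block_union_blockOver_erase hx]
    rw [hij] at hl
    exact hl.detour hr disjoint_block_blockOver_erase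
  · rw [← Finset.card_erase_add_one hx, succ_nsmul, ← hrM]
    simp only [← Multiset.coe_add, ← Multiset.cons_coe, ← Multiset.singleton_add]
    abel
  · exact fun σ hσ => (mem_block_castSucc.1 hv).2 ▸ Finset.ne_of_mem_erase hσ.2

theorem UniformlyLaceable.succ (hij : i.succ = j.castSucc) (hi : 1 ≤ (i : ℕ))
    (hM : UniformlyLaceable i M) :
    UniformlyLaceable j (((j + 2 : ℕ) • (j ::ₘ M)).erase i) := by
  intro x y hy hsign
  suffices ∃ l, IsGrayWord x y (block j.succ x) l ∧
      i ::ₘ (l : Multiset (Fin n)) = (j + 2 : ℕ) • (j ::ₘ M) ∧ IsEvasive j x l by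
    obtain ⟨l, hl, hlM, hev⟩ := this
    exact ⟨l, hl, by rw [← hlM, Multiset.erase_cons_head], hev⟩
  have hx_free : x j.succ ∈ freeValues j.succ x := apply_mem_freeValues.2 le_rfl
  have hcard : (freeValues j.succ x).card = j + 2 := by rw [card_freeValues, Fin.val_succ]
  by_cases hyx : y j.succ = x j.succ
  · obtain ⟨l, hl, hlM, hev⟩ := exists_evasive_word hij hi hM subset_rfl hx_free
      (d := x j.succ) (fun _ hz _ => hz) (hij ▸ mem_block_castSucc.2 ⟨hy, hyx⟩) hsign
    exact ⟨l, blockOver_freeValues ▸ hl, hcard ▸ hlM, hev⟩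
  have hy_free : y j.succ ∈ freeValues j.succ x :=
    freeValues_eq_of_mem hy ▸ apply_mem_freeValues.2 le_rfl
  obtain ⟨e, he, he_apply, he_sign⟩ := exists_mem_block_sign_eq_neg (b := j.castSucc) (u := x)
    (by rw [← hij, Fin.val_succ]; omega) (mem_freeValues_castSucc.2 ⟨hy_free, hyx⟩)
  obtain ⟨l, hl, hlM, hev⟩ := exists_evasive_word hij hi hM
    (L := (freeValues j.succ x).erase (y j.succ)) (Finset.erase_subset _ _)
    (Finset.mem_erase.2 ⟨Ne.symm hyx, hx_free⟩)
    (fun _ hz hzy => Finset.mem_erase.2 ⟨hzy, hz⟩) (hij ▸ he) he_sign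
  have hv : e * adjSwap j ∈ block j.castSucc y := mem_block_castSucc.2
    ⟨block_eq_of_mem hy ▸ mul_adjSwap_mem_block le_rfl (mem_block_castSucc.1 he).1,
      by rw [mul_adjSwap_succ, he_apply]⟩
  obtain ⟨r, hr, rfl, -⟩ := hM (e * adjSwap j) y (hij ▸ block_eq_of_mem hv ▸ mem_block_self)
    (by rw [sign_mul_adjSwap, he_sign, neg_neg, hsign])
  refine ⟨l ++ j :: r, ?_, ?_, hev.append _⟩
  · rw [hij, block_eq_of_mem hv] at hr
    rw [← blockOver_eq_of_mem hy] at hl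
    have := hl.append hr disjoint_block_blockOver_erase.symm
    rwa [Set.union_comm, ← freeValues_eq_of_mem hy,
      block_union_blockOver_erase (apply_mem_freeValues.2 le_rfl), blockOver_freeValues,
      block_eq_of_mem hy] at this
  · rw [← Multiset.coe_add, ← Multiset.cons_coe, ← Multiset.cons_add, hlM, ← hcard,
      ← Finset.card_erase_add_one hy_free, succ_nsmul]

theorem UniformlyLaceable.exists_of_le (hi : 1 ≤ (i : ℕ)) (hM : UniformlyLaceable i M)
    (hij : i ≤ j) : ∃ M', UniformlyLaceable j M' := by
  suffices ∀ k, (i : ℕ) ≤ k → ∀ hk : k < n, ∃ M', UniformlyLaceable ⟨k, hk⟩ M' from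
    this j hij j.isLt
  intro k hik
  induction k, hik using Nat.le_induction with
  | base => exact fun _ => ⟨M, hM⟩
  | succ k hik ih =>
    intro hk
    obtain ⟨M', hM'⟩ := ih (Nat.lt_of_succ_lt hk)
    exact ⟨_, hM'.succ (j := ⟨k + 1, hk⟩) rfl (hi.trans hik)⟩

end Extension

section Extend

variable {m : ℕ}

/-- The embedding of `S_{m+1}` into `S_{n+1}` as the permutations of `0, …, m`. -/
def extendPerm (h : m ≤ n) : Perm (Fin (m + 1)) →* Perm (Fin (n + 1)) :=
  ofSubtype.comp (Fin.castLEquiv (Nat.succ_le_succ h)).permCongrHom.toMonoidHom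

variable (h : m ≤ n)

theorem extendPerm_apply_castLE (g : Perm (Fin (m + 1))) (a : Fin (m + 1)) :
    extendPerm h g (a.castLE (Nat.succ_le_succ h)) = (g a).castLE (Nat.succ_le_succ h) :=
  ofSubtype_apply_coe _ (Fin.castLEquiv (Nat.succ_le_succ h) a)

theorem extendPerm_apply_of_lt (g : Perm (Fin (m + 1))) {j : Fin (n + 1)} (hj : m < (j : ℕ)) :
    extendPerm h g j = j :=
  ofSubtype_apply_of_not_mem _ (Nat.not_lt.2 hj)

theorem extendPerm_injective : Function.Injective (extendPerm h) :=
  ofSubtype_injective.comp (MulEquiv.injective _)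

theorem sign_extendPerm (g : Perm (Fin (m + 1))) : sign (extendPerm h g) = sign g :=
  (sign_ofSubtype _).trans (sign_permCongr _ g)

theorem extendPerm_adjSwap (i : Fin m) : extendPerm h (adjSwap i) = adjSwap (i.castLE h) := by
  exact (congrArg ofSubtype (symm_trans_swap_trans _ _ _)).trans (ofSubtype_swap_eq _ _)

theorem exists_extendPerm_eq {τ : Perm (Fin (n + 1))} (hτ : ∀ j : Fin (n + 1), m < j → τ j = j) :
    ∃ g, extendPerm h g = τ := by
  obtain ⟨g, rfl⟩ : τ ∈ (ofSubtype (p := fun j : Fin (n + 1) => j < m + 1)).range :=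
    mem_range_ofSubtype_iff.2 fun j hj => by
      by_contra hmj
      exact mem_support.1 hj (hτ j (Nat.lt_of_succ_le (not_lt.1 hmj)))
  exact ((Fin.castLEquiv (Nat.succ_le_succ h)).permCongrHom.surjective g).imp
    fun _ => congrArg ofSubtype

theorem image_extendPerm_block (b : Fin (m + 1)) (x : Perm (Fin (n + 1))) :
    (fun g => x * extendPerm h g) '' block b 1 = block (b.castLE (Nat.succ_le_succ h)) x := by
  ext σ
  constructor
  · rintro ⟨g, hg, rfl⟩ j hj
    refine congrArg x ?_
    obtain hmj | hmj := lt_or_ge m j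
    · exact extendPerm_apply_of_lt h g hmj
    · have := extendPerm_apply_castLE h g ⟨j, Nat.lt_succ_of_le hmj⟩
      rwa [hg (show b < _ from hj)] at this
  · intro hσ
    obtain ⟨g, hg⟩ := exists_extendPerm_eq h (τ := x⁻¹ * σ) fun j hj =>
      (congrArg x.symm (hσ (Fin.lt_def.2 (b.is_le.trans_lt hj)))).trans (x.symm_apply_apply j)
    obtain rfl : x * extendPerm h g = σ := eq_inv_mul_iff_mul_eq.1 hg
    refine ⟨g, fun j hj => ?_, rfl⟩
    have hfix : x (extendPerm h g (j.castLE (Nat.succ_le_succ h))) =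
        x (j.castLE (Nat.succ_le_succ h)) := hσ (show b < j from hj)
    rw [x.injective.eq_iff, extendPerm_apply_castLE] at hfix
    exact Fin.castLE_injective _ hfix

theorem mul_extendPerm_mul_adjSwap (x : Perm (Fin (n + 1))) (g : Perm (Fin (m + 1))) (i : Fin m) :
    x * extendPerm h (g * adjSwap i) = x * extendPerm h g * adjSwap (i.castLE h) := by
  rw [map_mul, extendPerm_adjSwap, mul_assoc]

theorem IsEvasive.mul_extendPerm {i : Fin m} {g : Perm (Fin (m + 1))} {l : List (Fin m)}
    (hl : IsEvasive i g l) (x : Perm (Fin (n + 1))) :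
    IsEvasive (i.castLE h) (x * extendPerm h g) (l.map (Fin.castLE h)) := by
  intro d
  let f : Fin (m + 1) → Fin (n + 1) := fun a => x (a.castLE (Nat.succ_le_succ h))
  have hf : Function.Injective f := x.injective.comp (Fin.castLE_injective _)
  obtain ⟨d', hd'⟩ : ∃ d', ∀ a, f a = d → a = d' := by
    by_cases hd : ∃ a, f a = d
    · exact hd.imp fun d' hd' a ha => hf (ha.trans hd'.symm)
    · exact ⟨0, fun a ha => absurd ⟨a, ha⟩ hd⟩
  obtain ⟨l₁, l₂, rfl, hne₁, hne₂⟩ := hl d'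
  have hend (a : Fin (m + 1)) : endpoint (x * extendPerm h g) (l₁.map (Fin.castLE h))
      (a.castLE (Nat.succ_le_succ h)) = f (endpoint g l₁ a) := by
    rw [endpoint_map (f := fun g => x * extendPerm h g) (mul_extendPerm_mul_adjSwap h x)]
    exact congrArg x (extendPerm_apply_castLE h _ a)
  exact ⟨_, _, List.map_append, fun hd => hne₁ (hd' _ ((hend i.castSucc).symm.trans hd)),
    fun hd => hne₂ (hd' _ ((hend i.succ).symm.trans hd))⟩

theorem uniformlyLaceable_castLE {i : Fin m} {M : Multiset (Fin m)}
    (hM : ∀ g ∈ block i.succ 1, sign g = -1 →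
      ∃ l, IsGrayWord 1 g (block i.succ 1) l ∧ (l : Multiset (Fin m)) = M ∧ IsEvasive i 1 l) :
    UniformlyLaceable (i.castLE h) (M.map (Fin.castLE h)) := by
  intro x y hy hsign
  have himage : _ = block (i.castLE h).succ x := image_extendPerm_block h i.succ x
  obtain ⟨g, hg, rfl⟩ := himage.symm.subset hy
  rw [Perm.sign_mul, sign_extendPerm, ← mul_neg_one, mul_right_inj] at hsign
  obtain ⟨l, hl, rfl, hev⟩ := hM g hg hsign
  have hword := hl.map ((mul_right_injective x).comp (extendPerm_injective h))
    (mul_extendPerm_mul_adjSwap h x)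
  have hev' := hev.mul_extendPerm h x
  simp only [Function.comp_apply] at hword
  rw [himage, map_one, mul_one] at hword
  rw [map_one, mul_one] at hev'
  exact ⟨l.map (Fin.castLE h), hword, rfl, hev'⟩

end Extend

section SymmetricGroupFive

/-- Swaps the entries at the positions `i` and `i + 1` of a list; out of range it does nothing. -/
def swapAt {α : Type*} : ℕ → List α → List α
  | 0, a :: b :: t => b :: a :: t
  | i + 1, a :: t => a :: swapAt i t
  | _, t => t

/-- The one-line notation of a permutation, with natural numbers as entries so that the kernel
computes with it quickly. -/
def oneLine (σ : Perm (Fin 5)) : List ℕ :=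
  List.ofFn fun j => (σ j : ℕ)

/-- The arrangements visited from `t` by the word `l`, in one-line notation. -/
def oneLineTrace (t : List ℕ) (l : List (Fin 4)) : List (List ℕ) :=
  l.scanl (fun t (i : Fin 4) => swapAt i t) t

/-- Decides whether a list has no repetitions and no entry among the bits of `seen`. -/
def noRepeat : ℕ → List ℕ → Bool
  | _, [] => true
  | seen, c :: l => !seen.testBit c && noRepeat (seen ||| 2 ^ c) l

/-- The word whose `k`-th letter is the `k`-th digit of `code` in base `4`, the least significant
digit coming first. -/
def decodeWord (code : ℕ) : List (Fin 4) :=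
  (List.range 119).map fun k => Fin.ofNat 4 (code / 4 ^ k)

/-- The letters of each word in `hamiltonTable`. -/
def hamiltonTableLetters : Multiset (Fin 4) :=
  .replicate 38 0 + .replicate 38 1 + .replicate 38 2 + .replicate 5 3

/-- The odd permutations of five values, each with the code of a word that leads to it from the
identity, visits all of `S_5` and is evasive. The words, all with the same letter counts, were
found by computer search. -/
def hamiltonTable : List (List ℕ × ℕ) := [
  ([0, 1, 2, 4, 3], 263294880975203811502500384631587271180988813659952372880200547099373857),
  ([0, 1, 3, 2, 4], 124902315559005795001263179752879846051824715366384731322537925324345880),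
  ([0, 1, 4, 3, 2], 29555712218511000650429313830627166546411165432296624945874984220330278),
  ([0, 2, 1, 3, 4], 43358809894718432230401270546116982955552877882740295979916612889840052),
  ([0, 2, 3, 4, 1], 44113885903614509289002667679865187211535836914138075635692216886002884),
  ([0, 2, 4, 1, 3], 42395163032946679179004803854221351831178314407321175326253896767514438),
  ([0, 3, 1, 4, 2], 57863668463886690360829650374872677388062585310073204907707785307851041),
  ([0, 3, 2, 1, 4], 57198117132869855188000062800567116703624780456865878459065326899703177),
  ([0, 3, 4, 2, 1], 57967927629437446209419211622022465858818622573219666212333811099116647),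
  ([0, 4, 1, 2, 3], 57165449560616813009493993710199942065586524593670077748266466788118817),
  ([0, 4, 2, 3, 1], 236508722793440917105065477613636976813462873457156505186888624079225928),
  ([0, 4, 3, 1, 2], 169755872115732331557326938202278726875104396203196582619560345313495108),
  ([1, 0, 2, 3, 4], 173435239578898092737002318796638101714241990612753962491785241664440529),
  ([1, 0, 3, 4, 2], 57863668463887309930957008274589177836251930679479633598462677800732205),
  ([1, 0, 4, 2, 3], 169781274711437430033986003575056772953796064242400330216736623094434916),
  ([1, 2, 0, 4, 3], 124907283306314264262453400477255856003956727346110791546500307192224054),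
  ([1, 2, 3, 0, 4], 29699029755132705319250180150080086990645242365563008459418587552434449),
  ([1, 2, 4, 3, 0], 42395163032946392914810433391565365455867501007601494203337296722106466),
  ([1, 3, 0, 2, 4], 251648159718086677253798781710389289526392427212016661119158228250562953),
  ([1, 3, 2, 4, 0], 263294880975203811502501976418108953908483496043864228120554129919977031),
  ([1, 3, 4, 0, 2], 124893858664621644365779755180293517178156081912922160402158269269878310),
  ([1, 4, 0, 3, 2], 57965788002962345132959137797234897032846145373018453352938380033362209),
  ([1, 4, 2, 0, 3], 173030840385724294943520169057074459897888782309314037952694178538425160),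
  ([1, 4, 3, 2, 0], 173437379249850866122600504007946524437004054068970426460502941862358289),
  ([2, 0, 1, 4, 3], 57061387129879347699964394714045880329150877934834235404983791201425590),
  ([2, 0, 3, 1, 4], 345749741761877916436895992875940363174757796975434616416272710218359065),
  ([2, 0, 4, 3, 1], 31181867707448760210711207249074739261531297186096413881831394988295266),
  ([2, 1, 0, 3, 4], 263590933560278271550791355755335287608883584256805549827826969420570913),
  ([2, 1, 3, 4, 0], 173017360404230887829086444624621626513550723414294170706554419862673506),
  ([2, 1, 4, 0, 3], 29555712250945147798760535605761255218414511304995474096827548337202758),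
  ([2, 3, 0, 4, 1], 124693242246154721114712266228393001557690997450088938367152915437160732),
  ([2, 3, 1, 0, 4], 263590933560278271503251718718332955754526995629834849328103053764879492),
  ([2, 3, 4, 1, 0], 237309073480441751961719747399814695185801419923540794796805574798947912),
  ([2, 4, 0, 1, 3], 237413122943779063734847045200128538233857279873875914948182705880305953),
  ([2, 4, 1, 3, 0], 173030840385724695404982192017833368003844571052561731614237151700854343),
  ([2, 4, 3, 0, 1], 173030840385724511385316337890440275798057992740486557908346503418206353),
  ([3, 0, 1, 2, 4], 57070107348785869657111175955003761067419952890851999301580492911289954),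
  ([3, 0, 2, 4, 1], 44116835374091797273665579954845111283409085914595362408802007508345416),
  ([3, 0, 4, 1, 2], 264918798545458662561396028618888908244654430582432857404953556796148001),
  ([3, 1, 0, 4, 2], 264918996138245241016247060473716354180962878227701904777685478153525325),
  ([3, 1, 2, 0, 4], 196821737572036859178746369403123080323136768298444546518768637782140488),
  ([3, 1, 4, 2, 0], 31179641591399914226400222757580905786830083494639476844575997236627729),
  ([3, 2, 0, 1, 4], 117984337395870780382202245341070635094955614931553064077478800824391825),
  ([3, 2, 1, 4, 0], 250357675422311363533876795988676525970874485300756730523159942173071515),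
  ([3, 2, 4, 0, 1], 176490173509801530961582924000039349930107046986861084886887206700213836),
  ([3, 4, 0, 2, 1], 236610842332680200818602770011875314177531075547200158673250926678582343),
  ([3, 4, 1, 0, 2], 29555514658158204479435454071394138650382969618064667524326416629991718),
  ([3, 4, 2, 1, 0], 31179629821200678333744577908023631522477334973546284944327476424285252),
  ([4, 0, 1, 3, 2], 117984337319198488332152743775744414044476184779550199461258236034883985),
  ([4, 0, 2, 1, 3], 117983947733993418211825149630772384784582542594677546868297342483047558),
  ([4, 0, 3, 2, 1], 169781225742812949579237957419538627517028679464972111187018246778276113),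
  ([4, 1, 0, 2, 3], 251220170694058280675412443973124223608553450653575079835044245419397657),
  ([4, 1, 2, 3, 0], 263294881449494516924169104048381200594512887959089787116385808947896930),
  ([4, 1, 3, 0, 2], 117987299139070526910912223069399440168901829122275383052204498480566808),
  ([4, 2, 0, 3, 1], 236506583123246192489890293941202414553262078821391886923602199163735138),
  ([4, 2, 1, 0, 3], 121267644054898257731977482236453818631398841928845219531425782387853410),
  ([4, 2, 3, 1, 0], 264919188130664804491417028220614796376612002879587344248247947319461960),
  ([4, 3, 0, 1, 2], 57061387852788218482117599956742199610563193405700121176870605705856612),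
  ([4, 3, 1, 2, 0], 264919188130665044851755175258447954723861263153971135866843981004480913),
  ([4, 3, 2, 0, 1], 173017302463179283460500933479160285978698271240597964283916558322966817)]

theorem foldl_swapAt_hamiltonTable : ∀ e ∈ hamiltonTable,
    (decodeWord e.2).foldl (fun t (i : Fin 4) => swapAt i t) (oneLine 1) = e.1 := by
  decide +kernel

theorem noRepeat_hamiltonTable : ∀ e ∈ hamiltonTable,
    noRepeat 0 ((oneLineTrace (oneLine 1) (decodeWord e.2)).map (Nat.ofDigits 5)) = true := by
  decide +kernel

theorem count_hamiltonTable : ∀ e ∈ hamiltonTable, ∀ i,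
    (decodeWord e.2 : Multiset (Fin 4)).count i = hamiltonTableLetters.count i := by
  decide +kernel

theorem avoids_hamiltonTable : ∀ e ∈ hamiltonTable, ∀ d : Fin 5,
    ∃ p ∈ (oneLineTrace (oneLine 1) (decodeWord e.2)).zip (decodeWord e.2),
      p.2 = 3 ∧ (d : ℕ) ∉ p.1.drop 3 := by
  decide +kernel

theorem oneLine_mem_hamiltonTable :
    ∀ g : Perm (Fin 5), sign g = -1 → oneLine g ∈ hamiltonTable.map Prod.fst := by
  decide +kernel

theorem oneLine_mul_adjSwap :
    ∀ (σ : Perm (Fin 5)) (i : Fin 4), oneLine (σ * adjSwap i) = swapAt i (oneLine σ) := by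
  decide +kernel

theorem oneLine_endpoint (σ : Perm (Fin 5)) (l : List (Fin 4)) :
    oneLine (endpoint σ l) = l.foldl (fun t (i : Fin 4) => swapAt i t) (oneLine σ) :=
  (List.foldl_hom oneLine fun τ i => (oneLine_mul_adjSwap τ i).symm).symm

theorem map_oneLine_vertices (σ : Perm (Fin 5)) (l : List (Fin 4)) :
    (vertices σ l).map oneLine = oneLineTrace (oneLine σ) l := by
  induction l generalizing σ with
  | nil => rfl
  | cons i l ih =>
    simp only [vertices, oneLineTrace, List.scanl_cons, List.map_cons] at ih ⊢
    rw [ih, oneLine_mul_adjSwap]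

theorem oneLine_injective : Function.Injective oneLine := fun _ _ h =>
  Equiv.ext fun j => Fin.ext (congrFun (List.ofFn_injective h) j)

theorem nodup_of_noRepeat {seen : ℕ} {l : List ℕ} (h : noRepeat seen l = true) :
    l.Nodup ∧ ∀ c ∈ l, seen.testBit c = false := by
  induction l generalizing seen with
  | nil => exact ⟨List.nodup_nil, fun _ hc => absurd hc List.not_mem_nil⟩
  | cons c l ih =>
    simp only [noRepeat, Bool.and_eq_true, Bool.not_eq_true'] at h
    obtain ⟨hl, hseen⟩ := ih h.2
    simp only [Nat.testBit_or, Nat.testBit_two_pow, Bool.or_eq_false_iff,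
      decide_eq_false_iff_not] at hseen
    exact ⟨List.nodup_cons.2 ⟨fun hc => (hseen c hc).2 rfl, hl⟩,
      List.forall_mem_cons.2 ⟨h.1, fun c' hc' => (hseen c' hc').1⟩⟩

theorem exists_hamiltonian_word {g : Perm (Fin 5)} (hg : sign g = -1) :
    ∃ l, IsGrayWord 1 g Set.univ l ∧ (l : Multiset (Fin 4)) = hamiltonTableLetters ∧
      IsEvasive 3 1 l := by
  obtain ⟨e, he, heg⟩ := List.mem_map.1 (oneLine_mem_hamiltonTable g hg)
  have hend : endpoint 1 (decodeWord e.2) = g := oneLine_injective <| by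
    rw [oneLine_endpoint, foldl_swapAt_hamiltonTable e he, heg]
  have hnodup : (vertices 1 (decodeWord e.2)).Nodup := by
    have := (nodup_of_noRepeat (noRepeat_hamiltonTable e he)).1
    rw [← map_oneLine_vertices] at this
    exact (this.of_map _).of_map _
  refine ⟨decodeWord e.2, IsGrayWord.univ_of_length hend hnodup ?_,
    Multiset.ext.2 (count_hamiltonTable e he), fun d => ?_⟩
  · rw [decodeWord, List.length_map, List.length_range]
    rfl
  · obtain ⟨⟨t, i⟩, hp, rfl, hd⟩ := avoids_hamiltonTable e he d
    rw [← map_oneLine_vertices, List.zip_map_left, List.mem_map] at hp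
    obtain ⟨⟨σ, i⟩, hσ, hσt⟩ := hp
    obtain ⟨rfl, rfl⟩ := Prod.mk.inj hσt
    obtain ⟨l₁, l₂, hl, rfl⟩ := exists_append_of_mem_zip hσ
    have hdrop (σ : Perm (Fin 5)) :
      (oneLine σ).drop 3 = [(σ (Fin.castSucc 3) : ℕ), (σ (Fin.succ 3) : ℕ)] := rfl
    rw [hdrop, List.mem_pair, not_or] at hd
    exact ⟨l₁, l₂, hl, fun h => hd.1 (congrArg Fin.val h.symm),
      fun h => hd.2 (congrArg Fin.val h.symm)⟩

end SymmetricGroupFive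

theorem exists_uniformlyLaceable {j : Fin n} (hj : 3 ≤ (j : ℕ)) :
    ∃ M, UniformlyLaceable j M := by
  have hn : 4 ≤ n := hj.trans_lt j.isLt
  have hbase : UniformlyLaceable (Fin.castLE hn 3) (hamiltonTableLetters.map (Fin.castLE hn)) := by
    refine uniformlyLaceable_castLE hn fun g _ hg => ?_
    rw [show (Fin.succ 3 : Fin 5) = Fin.last 4 from rfl, block_last]
    exact exists_hamiltonian_word hg
  exact hbase.exists_of_le (Nat.le_add_left 1 2) hj

/-- The Gray code traced from `x` by the word `l`, indexed by the number of swaps already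
performed; `N` is meant to be the length of `l`. -/
def code (x : Perm (Fin (n + 1))) (l : List (Fin n)) (N : ℕ) (s : Fin (N + 1)) :
    Perm (Fin (n + 1)) :=
  endpoint x (l.take s)

section Code

variable {x y : Perm (Fin (n + 1))} {l : List (Fin n)} {N : ℕ}

theorem code_last (hN : l.length = N) : code x l N (Fin.last N) = endpoint x l := by
  rw [code, Fin.val_last, ← hN, List.take_length]

theorem code_add_one (hN : l.length = N) {s : Fin (N + 1)} (hs : (s : ℕ) < N) :
    code x l N (s + 1) = code x l N s * adjSwap (l[(s : ℕ)]'(hs.trans_eq hN.symm)) := by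
  rw [code, Fin.val_add_one_of_lt (Fin.lt_last_iff_ne_last.2 (Fin.ne_of_lt hs)),
    List.take_succ_eq_append_getElem (hs.trans_eq hN.symm), endpoint_append_cons]
  rfl

theorem IsGrayWord.code_bijective (h : IsGrayWord x y Set.univ l) (hN : l.length = N) :
    Function.Bijective (code x l N) := by
  have hlen : (vertices x l).length = N + 1 := by rw [vertices, List.length_scanl, hN]
  have hcode (s : Fin (N + 1)) : code x l N s = (vertices x l)[(s : ℕ)] := by
    simp only [code, endpoint, vertices, List.getElem_scanl]
  constructor
  · intro s t hst
    rw [hcode, hcode] at hst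
    exact Fin.ext (h.nodup.getElem_inj_iff.1 hst)
  · intro σ
    obtain ⟨k, hk, hσ⟩ := List.getElem_of_mem ((h.mem_iff σ).2 (Set.mem_univ σ))
    exact ⟨⟨k, hk.trans_eq hlen⟩, (hcode _).trans hσ⟩

theorem card_filter_code_add_one (hN : l.length = N) (i : Fin n) :
    (Finset.univ.filter fun s : Fin (N + 1) =>
      (s : ℕ) < N ∧ code x l N (s + 1) = code x l N s * adjSwap i).card = l.count i := by
  have hstep (s : Fin N) : code x l N s.succ = code x l N s.castSucc * adjSwap i ↔
      l.get (s.cast hN.symm) = i := by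
    rw [← Fin.coeSucc_eq_succ, code_add_one hN s.isLt, mul_right_inj, adjSwap_injective.eq_iff]
    rfl
  have hfilter : (Finset.univ.filter fun s : Fin (N + 1) =>
      (s : ℕ) < N ∧ code x l N (s + 1) = code x l N s * adjSwap i) =
        (Finset.univ.filter fun s => l.get (s.cast hN.symm) = i).map Fin.castSuccEmb := by
    ext s
    cases s using Fin.lastCases with
    | last => simp
    | cast s => simp [hstep]
  rw [hfilter, Finset.card_map]
  exact Fin.card_filter_univ_eq_vector_get_eq_count i ⟨l, hN⟩

end Code

theorem sign_swap_zero_one_mul [NeZero n] (σ : Perm (Fin (n + 1))) :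
    sign (swap 0 1 * σ) = -sign σ := by
  rw [Perm.sign_mul, sign_swap Fin.zero_ne_one', neg_one_mul]

theorem exists_isGrayWord_perm (hn : 1 ≤ n) (h3 : n ≠ 3) :
    ∃ l l' : List (Fin n), IsGrayWord 1 (swap 0 1) Set.univ l ∧
      IsGrayWord (swap 0 1 * finRotate (n + 1)) (finRotate (n + 1))⁻¹ Set.univ l' ∧ l.Perm l' := by
  obtain rfl | rfl | h4 : n = 1 ∨ n = 2 ∨ 4 ≤ n := by omega
  · exact ⟨[0], [0], .univ_of_length (by decide) (by decide) rfl,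
      .univ_of_length (by decide) (by decide) rfl, .rfl⟩
  · exact ⟨[1, 0, 1, 0, 1], [1, 0, 1, 0, 1], .univ_of_length (by decide) (by decide) rfl,
      .univ_of_length (by decide) (by decide) rfl, .rfl⟩
  · have : NeZero n := ⟨by omega⟩
    let j : Fin n := ⟨n - 1, by omega⟩
    have hj : j.succ = Fin.last n := Fin.ext (Nat.sub_add_cancel hn)
    obtain ⟨M, hM⟩ := exists_uniformlyLaceable (j := j) (Nat.le_sub_one_of_lt h4)
    rw [UniformlyLaceable, hj] at hM
    simp only [block_last, Set.mem_univ, true_imp_iff] at hM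
    obtain ⟨l, hl, hlM, -⟩ := hM 1 (swap 0 1) (by rw [← mul_one (swap 0 1), sign_swap_zero_one_mul])
    obtain ⟨l', hl', hlM', -⟩ := hM (swap 0 1 * finRotate (n + 1)) (finRotate (n + 1))⁻¹
      (by rw [sign_swap_zero_one_mul, sign_inv, neg_neg])
    exact ⟨l, l', hl, hl', Multiset.coe_eq_coe.1 (hlM.trans hlM'.symm)⟩

end AdjacentGrayCode

open AdjacentGrayCode in
theorem two_adjacent_gray_codes_general (n : ℕ) (hn : 1 ≤ n) (h3 : n ≠ 3) :
    ∃ (N : ℕ) (G H : Fin (N + 1) → Equiv.Perm (Fin (n + 1))),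
      N + 1 = Nat.factorial (n + 1) ∧
      Function.Bijective G ∧
      G 0 = 1 ∧
      G (Fin.last N) = Equiv.swap 0 1 ∧
      (∀ s : Fin (N + 1), (s : ℕ) < N →
        ∃ i : ℕ, ∃ h : i + 1 < n + 1,
          G (s + 1) = G s * adjSwap ⟨i, Nat.lt_of_succ_lt_succ h⟩) ∧
      Function.Bijective H ∧
      H 0 = Equiv.swap 0 1 * finRotate (n + 1) ∧
      H (Fin.last N) = (finRotate (n + 1))⁻¹ ∧
      (∀ s : Fin (N + 1), (s : ℕ) < N →
        ∃ i : ℕ, ∃ h : i + 1 < n + 1,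
          H (s + 1) = H s * adjSwap ⟨i, Nat.lt_of_succ_lt_succ h⟩) ∧
      (∀ i : ℕ, ∀ h : i + 1 < n + 1,
        (Finset.univ.filter (fun s : Fin (N + 1) =>
          (s : ℕ) < N ∧ H (s + 1) = H s * adjSwap ⟨i, Nat.lt_of_succ_lt_succ h⟩)).card
        = (Finset.univ.filter (fun s : Fin (N + 1) =>
          (s : ℕ) < N ∧ G (s + 1) = G s * adjSwap ⟨i, Nat.lt_of_succ_lt_succ h⟩)).card) := by
  obtain ⟨l, l', hl, hl', hperm⟩ := exists_isGrayWord_perm hn h3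
  have hlen' := hperm.length_eq.symm
  refine ⟨l.length, code 1 l _, code _ l' _, ?_,
    hl.code_bijective rfl, rfl, (code_last rfl).trans hl.endpoint_eq, ?_,
    hl'.code_bijective hlen', rfl, (code_last hlen').trans hl'.endpoint_eq, ?_, ?_⟩
  · have hcard := Fintype.card_of_bijective (hl.code_bijective rfl)
    rwa [Fintype.card_fin, Fintype.card_perm, Fintype.card_fin] at hcard
  · exact fun s hs => ⟨l[(s : ℕ)], Nat.succ_lt_succ l[(s : ℕ)].isLt, code_add_one rfl hs⟩
  · exact fun s hs => ⟨l'[(s : ℕ)], Nat.succ_lt_succ l'[(s : ℕ)].isLt, code_add_one hlen' hs⟩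
  · intro i h
    have hi := Nat.lt_of_succ_lt_succ h
    exact ((card_filter_code_add_one hlen' ⟨i, hi⟩).trans (hperm.count_eq _).symm).trans
      (card_filter_code_add_one rfl _).symm

/-- Let `n ≥ 2` be even. Then there exist two Gray codes for `S_{n+1}` under
adjacent position-swaps: a code `G` from the identity word `123⋯(n+1)` to the word
`213⋯(n+1)` (the permutation `swap 0 1`), and a code `H` from the word `134⋯(n+1)2`
(the permutation `swap 0 1 * finRotate (n+1)`) to the word `(n+1)12⋯n` (the permutation
`(finRotate (n+1))⁻¹`), such that for each `i` the swap of positions `(i, i+1)` is used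
the same number of times in `H` as in `G`. -/
theorem two_adjacent_gray_codes (n : ℕ) (hn : 2 ≤ n) (he : Even n) :
    ∃ (N : ℕ) (G H : Fin (N + 1) → Equiv.Perm (Fin (n + 1))),
      N + 1 = Nat.factorial (n + 1) ∧
      Function.Bijective G ∧
      G 0 = 1 ∧
      G (Fin.last N) = Equiv.swap 0 1 ∧
      (∀ s : Fin (N + 1), (s : ℕ) < N →
        ∃ i : ℕ, ∃ h : i + 1 < n + 1,
          G (s + 1) = G s * Equiv.swap ⟨i, by omega⟩ ⟨i + 1, h⟩) ∧
      Function.Bijective H ∧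
      H 0 = Equiv.swap 0 1 * finRotate (n + 1) ∧
      H (Fin.last N) = (finRotate (n + 1))⁻¹ ∧
      (∀ s : Fin (N + 1), (s : ℕ) < N →
        ∃ i : ℕ, ∃ h : i + 1 < n + 1,
          H (s + 1) = H s * Equiv.swap ⟨i, by omega⟩ ⟨i + 1, h⟩) ∧
      (∀ i : ℕ, ∀ h : i + 1 < n + 1,
        (Finset.univ.filter (fun s : Fin (N + 1) =>
          (s : ℕ) < N ∧ H (s + 1) = H s * Equiv.swap ⟨i, by omega⟩ ⟨i + 1, h⟩)).card
        = (Finset.univ.filter (fun s : Fin (N + 1) =>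
          (s : ℕ) < N ∧ G (s + 1) = G s * Equiv.swap ⟨i, by omega⟩ ⟨i + 1, h⟩)).card) :=
  two_adjacent_gray_codes_general n (one_le_two.trans hn) fun h => absurd (h ▸ he) (by decide)
end

section
/- Let n ≥ 45 and set m = ⌊(n−8)/2⌋. Then there exist n binary words w_1, …, w_n of length m such that: (i) any two distinct words w_i, w_j differ in at least 4 positions; (ii) each word w_i has at least 3 blocks; and (iii) each word w_i has a block of length at least 2 that is not its last block. -/
/-!
Taking differences modulo 2 of a binary sequence that starts and ends with `0` gives a word of even
weight, so the words obtained from the binary digits of `2a` for distinct `a < 2 ^ k` differ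
pairwise in at least two of `k + 1` places: the sequences themselves agree at both ends but not
throughout, so their sum must change at least twice. Writing every letter twice raises the distance
to four, and prefixing `0010` supplies the required blocks. This gives `2 ^ k` words of length
`2 * k + 6`, whereas only about four times `k` are needed.
-/

section Count

variable {α : Type*} {f : ℕ → α} {i j l m r : ℕ}

theorem exists_ne_succ_of_ne (hij : i ≤ j) (h : f i ≠ f j) :
    ∃ p, i ≤ p ∧ p < j ∧ f p ≠ f (p + 1) := by
  induction j, hij using Nat.le_induction with
  | base => exact absurd rfl h
  | succ j hij ih =>
    by_cases hj : f i = f j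
    · exact ⟨j, hij, j.lt_succ_self, hj ▸ h⟩
    · obtain ⟨p, hip, hpj, hp⟩ := ih hj
      exact ⟨p, hip, hpj.trans j.lt_succ_self, hp⟩

theorem two_le_count_ne_succ [DecidableEq α] (hij : i ≤ j) (hjl : j ≤ l) (hlm : l ≤ m)
    (h₁ : f i ≠ f j) (h₂ : f j ≠ f l) : 2 ≤ Nat.count (fun p => f p ≠ f (p + 1)) m := by
  obtain ⟨p, -, hpj, hp⟩ := exists_ne_succ_of_ne hij h₁
  obtain ⟨q, hjq, hql, hq⟩ := exists_ne_succ_of_ne hjl h₂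
  have count_p_lt := Nat.count_strict_mono (p := fun p => f p ≠ f (p + 1)) hp (hpj.trans_le hjq)
  have count_q_lt := Nat.count_strict_mono (p := fun p => f p ≠ f (p + 1)) hq (hql.trans_le hlm)
  omega

theorem count_comp_div (P : ℕ → Prop) [DecidablePred P] (hr : 0 < r) :
    Nat.count (fun p => P (p / r)) (r * m) = r * Nat.count P m := by
  induction m with
  | zero => simp
  | succ m ih =>
    have count_block : Nat.count (fun p => P ((r * m + p) / r)) r = if P m then r else 0 := by
      have div_eq : ∀ p < r, (r * m + p) / r = m := fun p hp => by
        rw [Nat.mul_add_div hr, Nat.div_eq_of_lt hp, add_zero]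
      split_ifs with hm
      · exact Nat.count_iff_forall.2 fun p hp => by rwa [div_eq p hp]
      · exact Nat.count_iff_forall_not.2 fun p hp => by rwa [div_eq p hp]
    rw [Nat.mul_succ, Nat.count_add, ih, count_block, Nat.count_succ, mul_add, mul_ite, mul_one,
      mul_zero]

end Count

/-- The sequence of differences modulo 2 of consecutive letters of `u`; it turns sequences with
prescribed first and last letter into words with prescribed parity. -/
def xorDiff (u : ℕ → Bool) (i : ℕ) : Bool := u i ^^ u (i + 1)

theorem xorDiff_ne_xorDiff_iff (u v : ℕ → Bool) (i : ℕ) :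
    xorDiff u i ≠ xorDiff v i ↔ (u i ^^ v i) ≠ (u (i + 1) ^^ v (i + 1)) := by
  unfold xorDiff
  cases u i <;> cases v i <;> cases u (i + 1) <;> cases v (i + 1) <;> decide

theorem two_le_count_xorDiff_ne {u v : ℕ → Bool} {i j l : ℕ} (hij : i ≤ j) (hjl : j ≤ l)
    (hi : u i = v i) (hj : u j ≠ v j) (hl : u l = v l) :
    2 ≤ Nat.count (fun p => xorDiff u p ≠ xorDiff v p) l := by
  simp only [xorDiff_ne_xorDiff_iff]
  exact two_le_count_ne_succ (f := fun p => u p ^^ v p) hij hjl le_rfl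
    (by simpa [hi] using hj) (by simpa [hl] using hj)

theorem two_le_count_xorDiff_testBit_ne {a b k : ℕ} (ha : a < 2 ^ k) (hb : b < 2 ^ k)
    (hab : a ≠ b) :
    2 ≤ Nat.count (fun p => xorDiff (2 * a).testBit p ≠ xorDiff (2 * b).testBit p) (k + 1) := by
  have testBit_eq {i : ℕ} (hi : k ≤ i) : a.testBit i = b.testBit i := by
    have hpow : 2 ^ k ≤ 2 ^ i := Nat.pow_le_pow_right two_pos hi
    rw [Nat.testBit_lt_two_pow (ha.trans_le hpow), Nat.testBit_lt_two_pow (hb.trans_le hpow)]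
  obtain ⟨i, hi⟩ := Nat.exists_testBit_ne_of_ne hab
  have hik : i < k := lt_of_not_ge fun hki => hi (testBit_eq hki)
  have testBit_succ (x p : ℕ) : (2 * x).testBit (p + 1) = x.testBit p := by
    simp [Nat.testBit_succ]
  refine two_le_count_xorDiff_ne (i := 0) (j := i + 1) (by omega) (by omega) (by simp) ?_ ?_
  · rwa [testBit_succ, testBit_succ]
  · rw [testBit_succ, testBit_succ, testBit_eq le_rfl]

/-- The label with index `a`, as an infinite word to be truncated: the prefix `0010`, then the
differences modulo 2 of the binary digits of `2 * a`, lowest digit first, each written twice. The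
factor 2 makes the sequence of digits start with `0`. -/
def label (a : ℕ) : ℕ → Bool
  | 0 | 1 | 3 => false
  | 2 => true
  | p + 4 => xorDiff (2 * a).testBit (p / 2)

theorem four_le_count_label_ne {a b k m : ℕ} (ha : a < 2 ^ k) (hb : b < 2 ^ k) (hab : a ≠ b)
    (hm : 2 * k + 6 ≤ m) : 4 ≤ Nat.count (fun p => label a p ≠ label b p) m :=
  calc
    4 ≤ 2 * Nat.count (fun p => xorDiff (2 * a).testBit p ≠ xorDiff (2 * b).testBit p) (k + 1) :=
      Nat.mul_le_mul_left 2 (two_le_count_xorDiff_testBit_ne ha hb hab)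
    _ = Nat.count (fun p => label a (p + 4) ≠ label b (p + 4)) (2 * (k + 1)) :=
      (count_comp_div _ two_pos).symm
    _ ≤ Nat.count (fun p => label a p ≠ label b p) (2 * (k + 1) + 4) := by
      rw [Nat.count_add']
      exact Nat.le_add_right _ _
    _ ≤ Nat.count (fun p => label a p ≠ label b p) m := Nat.count_monotone _ hm

theorem two_le_count_label_ne_succ (a : ℕ) {m : ℕ} (hm : 3 ≤ m) :
    2 ≤ Nat.count (fun p => label a p ≠ label a (p + 1)) m :=
  two_le_count_ne_succ (i := 0) (j := 2) (l := 3) (by decide) (by decide) hm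
    (by simp [label]) (by simp [label])

theorem labels_exist_general {n m k : ℕ} (hn : n ≤ 2 ^ k) (hm : 2 * k + 6 ≤ m) :
    ∃ w : Fin n → ℕ → Bool,
      (∀ a b : Fin n, a ≠ b →
        4 ≤ ((Finset.range m).filter (fun p => w a p ≠ w b p)).card) ∧
      (∀ a : Fin n,
        2 ≤ ((Finset.range (m - 1)).filter (fun p => w a p ≠ w a (p + 1))).card) ∧
      (∀ a : Fin n, ∃ p q : ℕ, p ≤ q ∧ q + 1 < m ∧
        w a p = w a (p + 1) ∧ w a q ≠ w a (q + 1)) := by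
  simp only [← Nat.count_eq_card_filter_range]
  refine ⟨fun a => label a, fun a b hab => ?_, fun a => ?_, fun a => ?_⟩
  · exact four_le_count_label_ne (a.isLt.trans_le hn) (b.isLt.trans_le hn)
      (Fin.val_ne_of_ne hab) hm
  · exact two_le_count_label_ne_succ a (by omega)
  · exact ⟨0, 1, zero_le_one, by omega, by simp [label], by simp [label]⟩

theorem four_mul_add_le_two_pow {k : ℕ} (hk : 6 ≤ k) : 4 * k + 23 ≤ 2 ^ k := by
  induction k, hk using Nat.le_induction with
  | base => norm_num
  | succ k _ ih =>
    rw [pow_succ]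
    omega

/-- Let `n ≥ 45` and `m = ⌊(n−8)/2⌋`. Then there exist `n` binary words of
length `m` (encoded as functions `ℕ → Bool`, where only the positions `p < m` matter) such
that: (i) any two distinct words differ in at least 4 of the positions `p < m`;
(ii) each word has at least 3 blocks, i.e. at least 2 change-points `p` with `p + 1 < m`
and `w p ≠ w (p+1)` (the blocks are the maximal constant intervals, so a word with `c`
change-points has `c + 1` blocks); and (iii) each word has a block of length at least 2
that is not its last block, i.e. there are `p ≤ q` with `q + 1 < m`, `w p = w (p+1)`
(a block of length `≥ 2` containing positions `p, p+1`) and `w q ≠ w (q+1)` (a later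
change-point, so that block is not the last one). -/
theorem labels_exist (n : ℕ) (hn : 45 ≤ n) :
    ∃ w : Fin n → ℕ → Bool,
      (∀ a b : Fin n, a ≠ b →
        4 ≤ ((Finset.range ((n - 8) / 2)).filter (fun p => w a p ≠ w b p)).card) ∧
      (∀ a : Fin n,
        2 ≤ ((Finset.range ((n - 8) / 2 - 1)).filter
          (fun p => w a p ≠ w a (p + 1))).card) ∧
      (∀ a : Fin n, ∃ p q : ℕ, p ≤ q ∧ q + 1 < (n - 8) / 2 ∧
        w a p = w a (p + 1) ∧ w a q ≠ w a (q + 1)) := by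
  have hpow := four_mul_add_le_two_pow (k := ((n - 8) / 2 - 6) / 2) (by omega)
  exact labels_exist_general (k := ((n - 8) / 2 - 6) / 2) (by omega) (by omega)
end
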